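/- Let r ≥ 1 be an integer, ε > 0, and let B_r = {x ∈ V : d_G(0,x) ≤ r} be the ball of radius r about 0 in the graph metric. Suppose every vertex of G has degree at most 6 and that 12εr ≤ R_eff(0, V∖B_r) ≤ r. Then the number of collisions of two independent simple random walks on G killed upon exiting B_r, both started at 0, satisfies P_{0,0}(εr ≤ Z_{B_r} ≤ 72ε⁻²r) ≥ ε²/12. -/

import Mathlib

open MeasureTheory ENNReal
open scoped Classical

noncomputable section

variable {V : Type*}

/-- The cemetery-extended state space `B ∪ {†}` carries the discrete σ-algebra. -/
instance : MeasurableSpace (Option V) := ⊤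

/-- One-step transition probabilities of the simple random walk on `G` killed
upon exiting `B`; the cemetery state `†` is `none`. -/
def killedStep (G : SimpleGraph V) [G.LocallyFinite] (B : Set V) :
    Option V → Option V → ℝ≥0∞
  | some x, some y =>
      if x ∈ B ∧ G.Adj x y ∧ y ∈ B then ((G.degree x : ℝ≥0∞))⁻¹ else 0
  | some x, none =>
      if x ∈ B then
        (((G.neighborFinset x).filter (fun y => y ∉ B)).card : ℝ≥0∞) / (G.degree x : ℝ≥0∞)
      else 1
  | none, some _ => 0
  | none, none => 1

/-- Probability that the killed walk started at `a` follows `w` for its first `n` steps. -/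
def killedCylProb (G : SimpleGraph V) [G.LocallyFinite] (B : Set V) (a : V)
    {n : ℕ} (w : Fin (n + 1) → Option V) : ℝ≥0∞ :=
  (if w 0 = some a then 1 else 0) *
    ∏ i : Fin n, killedStep G B (w i.castSucc) (w i.succ)

/-- `μ` is the law of the simple random walk on `G` killed upon exiting `B`, started at `a`:
it is a probability measure on trajectories with the correct finite-dimensional
distributions. -/
def IsKilledWalkLaw (G : SimpleGraph V) [G.LocallyFinite] (B : Set V)
    (a : V) (μ : Measure (ℕ → Option V)) : Prop :=
  IsProbabilityMeasure μ ∧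
    ∀ (n : ℕ) (w : Fin (n + 1) → Option V),
      μ {ω | ∀ i : Fin (n + 1), ω i = w i} = killedCylProb G B a w

/-- `ν` is the joint law of two independent killed walks started at `a` and `b`. -/
def IsKilledPairLaw (G : SimpleGraph V) [G.LocallyFinite] (B : Set V)
    (a b : V) (ν : Measure (ℕ → Option V × Option V)) : Prop :=
  IsProbabilityMeasure ν ∧
    ∀ (n : ℕ) (w : Fin (n + 1) → Option V × Option V),
      ν {ω | ∀ i : Fin (n + 1), ω i = w i} =
        killedCylProb G B a (fun i => (w i).1) * killedCylProb G B b (fun i => (w i).2)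

/-- The number of collisions `Z_B = Σ_{n ≥ 0} 1(Xₙ = Yₙ ∈ B)` of the two coordinate
walks along a trajectory. -/
def collisions (B : Set V) (ω : ℕ → Option V × Option V) : ℝ≥0∞ :=
  ∑' n : ℕ, if ∃ x ∈ B, (ω n).1 = some x ∧ (ω n).2 = some x then 1 else 0

/-- The Dirichlet energy `ℰ(f,f) = (1/2) Σ_{x∼y} (f x - f y)²` of `f : V → ℝ`. -/
def energy (G : SimpleGraph V) (f : V → ℝ) : ℝ≥0∞ :=
  (1 / 2) * ∑' p : V × V,
    if G.Adj p.1 p.2 then ENNReal.ofReal ((f p.1 - f p.2) ^ 2) else 0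

/-- The effective resistance between `A₁` and `A₂` in `G`, every edge being a unit
resistor: its inverse is the infimum of the energies of finite-energy functions
that are `1` on `A₁` and `0` on `A₂`. -/
def effRes (G : SimpleGraph V) (A₁ A₂ : Set V) : ℝ≥0∞ :=
  (⨅ f ∈ {f : V → ℝ | energy G f ≠ ⊤ ∧ (∀ x ∈ A₁, f x = 1) ∧ ∀ x ∈ A₂, f x = 0},
    energy G f)⁻¹


section helpers

/-- The killed averaging operator. -/
def kP (G : SimpleGraph V) [G.LocallyFinite] (B : Finset V) (f : V → ℝ) (y : V) : ℝ :=
  if y ∈ B then (∑ z ∈ G.neighborFinset y, f z) / (G.degree y : ℝ) else 0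

/-- Degree-weighted inner product on `B`. -/
def kI (G : SimpleGraph V) [G.LocallyFinite] (B : Finset V) (f g : V → ℝ) : ℝ :=
  ∑ y ∈ B, (G.degree y : ℝ) * f y * g y

/-- `B` together with its neighbours. -/
def kS (G : SimpleGraph V) [G.LocallyFinite] (B : Finset V) : Finset V :=
  B ∪ B.biUnion (fun x => G.neighborFinset x)

/-- Real-valued Dirichlet form. -/
def kE (G : SimpleGraph V) [G.LocallyFinite] (B : Finset V) (f g : V → ℝ) : ℝ :=
  (1 / 2) * ∑ x ∈ kS G B, ∑ y ∈ kS G B,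
    if G.Adj x y then (f x - f y) * (g x - g y) else 0

lemma kE_comm (G : SimpleGraph V) [G.LocallyFinite] (B : Finset V) (f g : V → ℝ) :
    kE G B f g = kE G B g f := by
  unfold kE
  simp only [mul_comm]

lemma kI_comm (G : SimpleGraph V) [G.LocallyFinite] (B : Finset V) (f g : V → ℝ) :
    kI G B f g = kI G B g f := by
  unfold kI
  exact Finset.sum_congr rfl fun _ _ => by ring

lemma kS_sum (G : SimpleGraph V) [G.LocallyFinite] (B : Finset V) (h : V → ℝ) (x : V)
    (hx : x ∈ B) :
    ∑ y ∈ kS G B, (if G.Adj x y then h y else 0) = ∑ y ∈ G.neighborFinset x, h y := by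
  rw [← Finset.sum_filter]
  refine Finset.sum_congr ?_ fun _ _ => rfl
  ext y
  simp only [Finset.mem_filter, SimpleGraph.mem_neighborFinset, kS, Finset.mem_union,
    Finset.mem_biUnion]
  constructor
  · exact fun h => h.2
  · exact fun h => ⟨Or.inr ⟨x, hx, h⟩, h⟩

lemma kE_eq (G : SimpleGraph V) [G.LocallyFinite] (hpos : ∀ x, 0 < G.degree x)
    (B : Finset V) (f g : V → ℝ) (hf : ∀ x, x ∉ B → f x = 0) :
    kE G B f g = kI G B f g - kI G B f (kP G B g) := by
  have h1 : kE G B f g = ∑ x ∈ kS G B, ∑ y ∈ kS G B,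
      if G.Adj x y then f x * (g x - g y) else 0 := by
    have h2 : ∑ x ∈ kS G B, ∑ y ∈ kS G B, (if G.Adj x y then f x * (g x - g y) else 0)
        = ∑ x ∈ kS G B, ∑ y ∈ kS G B, (if G.Adj x y then f y * (g y - g x) else 0) := by
      rw [Finset.sum_comm]
      simp only [G.adj_comm]
    have h3 : ∑ x ∈ kS G B, ∑ y ∈ kS G B, (if G.Adj x y then (f x - f y) * (g x - g y) else 0)
       = ∑ x ∈ kS G B, ∑ y ∈ kS G B, (if G.Adj x y then f x * (g x - g y) else 0)
        + ∑ x ∈ kS G B, ∑ y ∈ kS G B, (if G.Adj x y then f y * (g y - g x) else 0) := by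
      rw [← Finset.sum_add_distrib]
      refine Finset.sum_congr rfl fun x _ => ?_
      rw [← Finset.sum_add_distrib]
      refine Finset.sum_congr rfl fun y _ => ?_
      split_ifs <;> ring
    unfold kE
    rw [h3, ← h2]; ring
  rw [h1]
  unfold kI
  rw [← Finset.sum_sub_distrib]
  symm
  have hsub : B ⊆ kS G B := Finset.subset_union_left
  rw [← Finset.sum_subset hsub (f := fun x => ∑ y ∈ kS G B,
      if G.Adj x y then f x * (g x - g y) else 0)]
  · refine Finset.sum_congr rfl fun x hx => ?_
    rw [kS_sum G B (fun y => f x * (g x - g y)) x hx, ← Finset.mul_sum, Finset.sum_sub_distrib]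
    have : (G.degree x : ℝ) ≠ 0 := by exact_mod_cast (hpos x).ne'
    simp only [kP, hx, if_true, Finset.sum_const, SimpleGraph.card_neighborFinset_eq_degree,
      nsmul_eq_mul]
    field_simp
  · intro x _ hx
    simp [hf x hx]

lemma kE_nonneg (G : SimpleGraph V) [G.LocallyFinite] (B : Finset V) (f : V → ℝ) :
    0 ≤ kE G B f f := by
  unfold kE
  refine mul_nonneg (by norm_num) (Finset.sum_nonneg fun x _ => Finset.sum_nonneg fun y _ => ?_)
  split_ifs
  · exact mul_self_nonneg _
  · exact le_rfl

lemma kE_cs (G : SimpleGraph V) [G.LocallyFinite] (B : Finset V) (f g : V → ℝ) :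
    (kE G B f g) ^ 2 ≤ kE G B f f * kE G B g g := by
  unfold kE
  rw [← Finset.sum_product', ← Finset.sum_product', ← Finset.sum_product']
  have h := Finset.sum_mul_sq_le_sq_mul_sq (kS G B ×ˢ kS G B)
    (fun p => if G.Adj p.1 p.2 then f p.1 - f p.2 else 0)
    (fun p => if G.Adj p.1 p.2 then g p.1 - g p.2 else 0)
  have e1 : ∀ (u v : V → ℝ), ∑ p ∈ kS G B ×ˢ kS G B,
     (if G.Adj p.1 p.2 then (u p.1 - u p.2) * (v p.1 - v p.2) else 0)
     = ∑ p ∈ kS G B ×ˢ kS G B, (if G.Adj p.1 p.2 then u p.1 - u p.2 else 0) *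
       (if G.Adj p.1 p.2 then v p.1 - v p.2 else 0) := by
    intro u v
    refine Finset.sum_congr rfl fun p _ => ?_
    split_ifs <;> ring
  rw [e1, e1, e1]
  simp only [← sq]
  nlinarith [h]

lemma energy_eq (G : SimpleGraph V) [G.LocallyFinite] (B : Finset V) (f : V → ℝ)
    (hf : ∀ x, x ∉ B → f x = 0) : energy G f = ENNReal.ofReal (kE G B f f) := by
  unfold energy kE
  rw [tsum_eq_sum (s := kS G B ×ˢ kS G B)]
  · rw [ENNReal.ofReal_mul (by norm_num), ← Finset.sum_product', ENNReal.ofReal_sum_of_nonneg]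
    · congr 1
      · rw [ENNReal.ofReal_div_of_pos (by norm_num)]; simp
      · refine Finset.sum_congr rfl fun p _ => ?_
        split_ifs
        · rw [sq]
        · simp
    · intro p _
      split_ifs
      · exact mul_self_nonneg _
      · exact le_rfl
  · rintro ⟨a, b⟩ hab
    dsimp only
    split_ifs with h
    · have ha : a ∉ B := by
        intro ha
        apply hab
        simp only [kS, Finset.mem_product, Finset.mem_union, Finset.mem_biUnion,
          SimpleGraph.mem_neighborFinset]
        exact ⟨Or.inl ha, Or.inr ⟨a, ha, h⟩⟩
      have hb : b ∉ B := by
        intro hb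
        apply hab
        simp only [kS, Finset.mem_product, Finset.mem_union, Finset.mem_biUnion,
          SimpleGraph.mem_neighborFinset]
        exact ⟨Or.inr ⟨b, hb, h.symm⟩, Or.inl hb⟩
      simp [hf a ha, hf b hb]
    · rfl

/-- Path bound. -/
lemma path_bound (G : SimpleGraph V) [G.LocallyFinite] (B : Finset V) (f : V → ℝ)
    (hf : ∀ x, x ∉ B → f x = 0) (hconn : G.Connected) (x u : V) (hu : u ∉ B) (L : ℕ)
    (hL : G.dist x u ≤ L) : (f x) ^ 2 ≤ 2 * L * kE G B f f := by
  obtain ⟨p, hp, hlen⟩ := hconn.exists_path_of_dist x u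
  have htel : f x = ∑ i ∈ Finset.range p.length, (f (p.getVert i) - f (p.getVert (i + 1))) := by
    rw [Finset.sum_range_sub']
    simp [hf u hu]
  have hcs := sq_sum_le_card_mul_sum_sq (s := Finset.range p.length)
    (f := fun i => f (p.getVert i) - f (p.getVert (i + 1)))
  rw [← htel, Finset.card_range] at hcs
  have hsum : ∑ i ∈ Finset.range p.length, (f (p.getVert i) - f (p.getVert (i + 1))) ^ 2
      ≤ 2 * kE G B f f := by
    have hE := kE_nonneg G B f
    rw [← ENNReal.ofReal_le_ofReal_iff (by positivity), ENNReal.ofReal_mul (by norm_num),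
      ← energy_eq G B f hf, ENNReal.ofReal_sum_of_nonneg (fun _ _ => sq_nonneg _)]
    unfold energy
    rw [← mul_assoc]
    have : ENNReal.ofReal 2 * (1 / 2) = 1 := by
      simp [ENNReal.mul_inv_cancel]
    rw [this, one_mul]
    have hinj : Set.InjOn (fun i => (p.getVert i, p.getVert (i + 1)))
        (Finset.range p.length : Set ℕ) := by
      intro i hi j hj hij
      simp only [Finset.coe_range, Set.mem_Iio] at hi hj
      exact hp.getVert_injOn (by simp; omega) (by simp; omega) (Prod.ext_iff.1 hij).1
    refine le_trans ?_ (ENNReal.sum_le_tsum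
      ((Finset.range p.length).image (fun i => (p.getVert i, p.getVert (i + 1)))))
    rw [Finset.sum_image hinj]
    refine Finset.sum_le_sum fun i hi => ?_
    rw [if_pos (p.adj_getVert_succ (Finset.mem_range.1 hi))]
  have hE := kE_nonneg G B f
  have : (p.length : ℝ) ≤ L := by exact_mod_cast hlen ▸ hL
  calc (f x) ^ 2 ≤ p.length * _ := hcs
    _ ≤ p.length * (2 * kE G B f f) := by gcongr
    _ ≤ L * (2 * kE G B f f) := by gcongr
    _ = _ := by ring

/-- Symmetrised heat kernel of the killed walk. -/
def kK (G : SimpleGraph V) [G.LocallyFinite] (B : Finset V) (x : V) : ℕ → V → ℝ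
  | 0 => fun y => if y = x then (G.degree x : ℝ)⁻¹ else 0
  | n + 1 => kP G B (kK G B x n)

lemma kK_nonneg (G : SimpleGraph V) [G.LocallyFinite] (B : Finset V) (x : V) (n : ℕ) (y : V) :
    0 ≤ kK G B x n y := by
  induction n generalizing y with
  | zero => unfold kK; split_ifs <;> positivity
  | succ n ih =>
    unfold kK kP
    split_ifs
    · exact div_nonneg (Finset.sum_nonneg fun z _ => ih z) (by positivity)
    · exact le_rfl

lemma kK_supp (G : SimpleGraph V) [G.LocallyFinite] (B : Finset V) (x : V) (hx : x ∈ B) (n : ℕ)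
    (y : V) (hy : y ∉ B) : kK G B x n y = 0 := by
  cases n with
  | zero => unfold kK; rw [if_neg]; rintro rfl; exact hy hx
  | succ n => unfold kK kP; rw [if_neg hy]

lemma kI_zero (G : SimpleGraph V) [G.LocallyFinite] (hpos : ∀ x, 0 < G.degree x)
    (B : Finset V) (x : V) (hx : x ∈ B) (f : V → ℝ) : kI G B (kK G B x 0) f = f x := by
  unfold kI kK
  rw [Finset.sum_eq_single x]
  · have : (G.degree x : ℝ) ≠ 0 := by exact_mod_cast (hpos x).ne'
    simp [this]
  · intro b _ hb; simp [hb]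
  · exact fun h => (h hx).elim

lemma kP_selfadj (G : SimpleGraph V) [G.LocallyFinite] (hpos : ∀ x, 0 < G.degree x)
    (B : Finset V) (f g : V → ℝ) (hf : ∀ x, x ∉ B → f x = 0) (hg : ∀ x, x ∉ B → g x = 0) :
    kI G B (kP G B f) g = kI G B f (kP G B g) := by
  have h1 := kE_eq G hpos B f g hf
  have h2 := kE_eq G hpos B g f hg
  rw [kE_comm, h2, kI_comm G B g f, kI_comm G B g] at h1
  linarith

lemma kI_kK (G : SimpleGraph V) [G.LocallyFinite] (hpos : ∀ x, 0 < G.degree x)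
    (B : Finset V) (x : V) (hx : x ∈ B) (n m : ℕ) :
    kI G B (kK G B x n) (kK G B x m) = kK G B x (m + n) x := by
  induction n generalizing m with
  | zero => rw [kI_zero G hpos B x hx]; rfl
  | succ n ih =>
    rw [show kK G B x (n + 1) = kP G B (kK G B x n) from rfl,
      kP_selfadj G hpos B _ _ (kK_supp G B x hx n) (kK_supp G B x hx m),
      show kP G B (kK G B x m) = kK G B x (m + 1) from rfl, ih]
    congr 1; omega

lemma kK_odd (G : SimpleGraph V) [G.LocallyFinite] (hpos : ∀ x, 0 < G.degree x)
    (B : Finset V) (x : V) (hx : x ∈ B) (n : ℕ) :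
    kK G B x (n + n + 1) x ≤ kK G B x (n + n) x := by
  have h := kE_eq G hpos B (kK G B x n) (kK G B x n) (kK_supp G B x hx n)
  rw [show kP G B (kK G B x n) = kK G B x (n + 1) from rfl, kI_kK G hpos B x hx,
    kI_kK G hpos B x hx] at h
  have h2 := kE_nonneg G B (kK G B x n)
  rw [show n + 1 + n = n + n + 1 by omega] at h
  linarith

/-- Truncated Green function. -/
def kT (G : SimpleGraph V) [G.LocallyFinite] (B : Finset V) (x : V) (N : ℕ) (y : V) : ℝ :=
  ∑ n ∈ Finset.range N, kK G B x n y

lemma kE_kT (G : SimpleGraph V) [G.LocallyFinite] (hpos : ∀ x, 0 < G.degree x)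
    (B : Finset V) (x : V) (hx : x ∈ B) (N : ℕ) (f : V → ℝ) (hf : ∀ x, x ∉ B → f x = 0) :
    kE G B f (kT G B x N) = f x - kI G B f (kK G B x N) := by
  rw [kE_eq G hpos B f _ hf]
  have h : ∀ N, kI G B f (kT G B x N) - kI G B f (kP G B (kT G B x N)) =
      kI G B f (kK G B x 0) - kI G B f (kK G B x N) := by
    intro N
    induction N with
    | zero => simp [kI, kT, kP]
    | succ N ih =>
      have e1 : kI G B f (kT G B x (N + 1)) = kI G B f (kT G B x N) + kI G B f (kK G B x N) := by
        unfold kI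
        rw [← Finset.sum_add_distrib]
        refine Finset.sum_congr rfl fun y _ => ?_
        rw [kT, Finset.sum_range_succ, ← kT]; ring
      have e2 : kI G B f (kP G B (kT G B x (N + 1))) =
          kI G B f (kP G B (kT G B x N)) + kI G B f (kK G B x (N + 1)) := by
        unfold kI
        rw [← Finset.sum_add_distrib]
        refine Finset.sum_congr rfl fun y hy => ?_
        rw [show kK G B x (N + 1) = kP G B (kK G B x N) from rfl]
        have : kP G B (kT G B x (N + 1)) y = kP G B (kT G B x N) y + kP G B (kK G B x N) y := by
          simp only [kP, hy, if_true, kT, Finset.sum_range_succ, Finset.sum_add_distrib]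
          ring
        rw [this]; ring
      rw [e1, e2]; linarith
  rw [h, kI_comm, kI_zero G hpos B x hx]

lemma kT_supp (G : SimpleGraph V) [G.LocallyFinite] (B : Finset V) (x : V) (hx : x ∈ B) (N : ℕ)
    (y : V) (hy : y ∉ B) : kT G B x N y = 0 :=
  Finset.sum_eq_zero fun n _ => kK_supp G B x hx n y hy

lemma kT_nonneg (G : SimpleGraph V) [G.LocallyFinite] (B : Finset V) (x : V) (N : ℕ)
    (y : V) : 0 ≤ kT G B x N y :=
  Finset.sum_nonneg fun n _ => kK_nonneg G B x n y

lemma kE_kT_le (G : SimpleGraph V) [G.LocallyFinite] (hpos : ∀ x, 0 < G.degree x)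
    (B : Finset V) (x : V) (hx : x ∈ B) (N : ℕ) :
    kE G B (kT G B x N) (kT G B x N) ≤ kT G B x N x := by
  rw [kE_kT G hpos B x hx N _ (kT_supp G B x hx N)]
  have : 0 ≤ kI G B (kT G B x N) (kK G B x N) :=
    Finset.sum_nonneg fun y _ => mul_nonneg (mul_nonneg (by positivity) (kT_nonneg G B x N y))
      (kK_nonneg G B x N y)
  linarith

lemma kT_le (G : SimpleGraph V) [G.LocallyFinite] (hpos : ∀ x, 0 < G.degree x)
    (B : Finset V) (hconn : G.Connected) (x u : V) (hx : x ∈ B) (hu : u ∉ B) (L : ℕ)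
    (hL : G.dist x u ≤ L) (N : ℕ) : kT G B x N x ≤ 2 * L := by
  have h1 := path_bound G B (kT G B x N) (kT_supp G B x hx N) hconn x u hu L hL
  have h2 := kE_kT_le G hpos B x hx N
  have h3 := kT_nonneg G B x N x
  rcases h3.eq_or_lt with h | h
  · rw [← h]; positivity
  · have h4 : (2 * L : ℝ) * kE G B (kT G B x N) (kT G B x N) ≤ 2 * L * kT G B x N x := by gcongr
    have : kT G B x N x * kT G B x N x ≤ 2 * L * kT G B x N x := by nlinarith
    exact le_of_mul_le_mul_right this h

/-- Collision probability at time `n` of two walks from `x`. -/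
def kC (G : SimpleGraph V) [G.LocallyFinite] (B : Finset V) (x : V) (n : ℕ) : ℝ :=
  ∑ y ∈ B, ((G.degree y : ℝ) * kK G B x n y) ^ 2

lemma kC_nonneg (G : SimpleGraph V) [G.LocallyFinite] (B : Finset V) (x : V) (n : ℕ) :
    0 ≤ kC G B x n := Finset.sum_nonneg fun _ _ => sq_nonneg _

lemma kC_ge (G : SimpleGraph V) [G.LocallyFinite] (hpos : ∀ x, 0 < G.degree x)
    (B : Finset V) (x : V) (hx : x ∈ B) (n : ℕ) : kK G B x (n + n) x ≤ kC G B x n := by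
  rw [← kI_kK G hpos B x hx]
  refine Finset.sum_le_sum fun y _ => ?_
  have : (1 : ℝ) ≤ G.degree y := by exact_mod_cast hpos y
  nlinarith [mul_nonneg (by linarith : (0 : ℝ) ≤ G.degree y) (sq_nonneg (kK G B x n y))]

lemma kC_le (G : SimpleGraph V) [G.LocallyFinite] (hpos : ∀ x, 0 < G.degree x)
    (hdeg : ∀ x, G.degree x ≤ 6)
    (B : Finset V) (x : V) (hx : x ∈ B) (n : ℕ) : kC G B x n ≤ 6 * kK G B x (n + n) x := by
  rw [← kI_kK G hpos B x hx, kI, Finset.mul_sum]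
  refine Finset.sum_le_sum fun y _ => ?_
  have : (G.degree y : ℝ) ≤ 6 := by exact_mod_cast hdeg y
  nlinarith [mul_nonneg (by positivity : (0 : ℝ) ≤ G.degree y) (sq_nonneg (kK G B x n y))]

lemma kC_sum_le (G : SimpleGraph V) [G.LocallyFinite] (hpos : ∀ x, 0 < G.degree x)
    (hdeg : ∀ x, G.degree x ≤ 6) (B : Finset V) (x : V) (hx : x ∈ B) (N : ℕ) :
    ∑ n ∈ Finset.range N, kC G B x n ≤ 6 * kT G B x (N + N) x := by
  induction N with
  | zero => simp [kT]
  | succ N ih =>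
    have h := kC_le G hpos hdeg B x hx N
    have h2 := kK_nonneg G B x (N + N + 1) x
    rw [Finset.sum_range_succ, show N + 1 + (N + 1) = N + N + 1 + 1 by omega, kT,
      Finset.sum_range_succ, Finset.sum_range_succ, ← kT]
    linarith

lemma kT_le_kC (G : SimpleGraph V) [G.LocallyFinite] (hpos : ∀ x, 0 < G.degree x)
    (B : Finset V) (x : V) (hx : x ∈ B) (N : ℕ) :
    kT G B x (N + N) x ≤ 2 * ∑ n ∈ Finset.range N, kC G B x n := by
  induction N with
  | zero => simp [kT]
  | succ N ih =>
    have h := kC_ge G hpos B x hx N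
    have h2 := kK_odd G hpos B x hx N
    rw [Finset.sum_range_succ, show N + 1 + (N + 1) = N + N + 1 + 1 by omega, kT,
      Finset.sum_range_succ, Finset.sum_range_succ, ← kT]
    linarith

lemma effRes_le (G : SimpleGraph V) [G.LocallyFinite] (hpos : ∀ x, 0 < G.degree x)
    (B : Finset V) (o : V) (ho : o ∈ B) (e : ℝ)
    (he : ∀ N, ∑ n ∈ Finset.range N, kC G B o n ≤ e) :
    effRes G {o} ((B : Set V)ᶜ) ≤ ENNReal.ofReal (2 * e) := by
  have hT : ∀ N, kT G B o N o ≤ 2 * e := by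
    intro N
    calc kT G B o N o ≤ kT G B o (N + N) o :=
          Finset.sum_le_sum_of_subset_of_nonneg (by simp)
            fun n _ _ => kK_nonneg G B o n o
      _ ≤ _ := kT_le_kC G hpos B o ho N
      _ ≤ _ := by linarith [he N]
  have hs : Summable (kC G B o) :=
    summable_of_sum_range_le (kC_nonneg G B o) he
  have hlim0 := hs.tendsto_atTop_zero
  have hlim : ∀ y ∈ B, Filter.Tendsto (fun n => (G.degree y : ℝ) * kK G B o n y)
      Filter.atTop (nhds 0) := by
    intro y hy
    have : Filter.Tendsto (fun n => ((G.degree y : ℝ) * kK G B o n y) ^ 2)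
      Filter.atTop (nhds 0) := by
      refine squeeze_zero (fun _ => sq_nonneg _) (fun n => ?_) hlim0
      exact Finset.single_le_sum (f := fun y => ((G.degree y : ℝ) * kK G B o n y) ^ 2)
        (fun _ _ => sq_nonneg _) hy
    have h2 := this.sqrt
    simp only [Real.sqrt_zero] at h2
    refine h2.congr fun n => Real.sqrt_sq (mul_nonneg (by positivity) (kK_nonneg G B o n y))
  have h0 : 0 ≤ e := by simpa using he 0
  unfold effRes
  rw [ENNReal.inv_le_iff_inv_le]
  refine le_iInf₂ fun f hf => ?_
  obtain ⟨-, hf1, hf2⟩ := hf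
  have hf0 : ∀ x, x ∉ B → f x = 0 := fun x hx => hf2 x (by simpa using hx)
  have hfo : f o = 1 := hf1 o rfl
  rw [energy_eq G B f hf0]
  have hdl : Filter.Tendsto (fun N => (1 - kI G B f (kK G B o N)) ^ 2)
      Filter.atTop (nhds ((1 - 0) ^ 2)) := by
    refine ((tendsto_const_nhds).sub ?_).pow 2
    have : Filter.Tendsto (fun N => ∑ y ∈ B, f y * ((G.degree y : ℝ) * kK G B o N y))
      Filter.atTop (nhds (∑ y ∈ B, f y * 0)) :=
      tendsto_finsetSum _ fun y hy => (hlim y hy).const_mul _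
    simp only [mul_zero, Finset.sum_const_zero] at this
    refine this.congr fun N => ?_
    exact Finset.sum_congr rfl fun y _ => by ring
  have hE := kE_nonneg G B f
  have hkey : (1 - 0 : ℝ) ^ 2 ≤ kE G B f f * (2 * e) := by
    refine le_of_tendsto' hdl fun N => ?_
    have h1 := kE_cs G B f (kT G B o N)
    rw [kE_kT G hpos B o ho N f hf0, hfo] at h1
    refine h1.trans ?_
    gcongr
    exact (kE_kT_le G hpos B o ho N).trans (hT N)
  have he2 : 0 < 2 * e := by
    rcases h0.eq_or_lt with h | h
    · rw [← h] at hkey; norm_num at hkey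
    · linarith
  rw [← ENNReal.ofReal_inv_of_pos he2]
  refine ENNReal.ofReal_le_ofReal ?_
  rw [inv_le_iff_one_le_mul₀ he2]
  linarith

instance optDiscrete : DiscreteMeasurableSpace (Option V) := ⟨fun _ => trivial⟩

/-- Killed n-step transition probabilities. -/
def kp (G : SimpleGraph V) [G.LocallyFinite] (B : Set V) (a : Option V) : ℕ → Option V → ℝ≥0∞
  | 0 => fun b => if b = a then 1 else 0
  | n + 1 => fun b => ∑' c, kp G B a n c * killedStep G B c b

lemma kp_eq (G : SimpleGraph V) [G.LocallyFinite] (hpos : ∀ x, 0 < G.degree x)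
    (B : Finset V) (x : V) (hx : x ∈ B) (n : ℕ) (y : V) :
    kp G (B : Set V) (some x) n (some y) = ENNReal.ofReal ((G.degree y : ℝ) * kK G B x n y) := by
  induction n generalizing y with
  | zero =>
    have h : (G.degree x : ℝ) ≠ 0 := by exact_mod_cast (hpos x).ne'
    by_cases hyx : y = x
    · subst hyx; simp [kp, kK, h]
    · simp [kp, kK, hyx]
  | succ n ih =>
    have h : (G.degree y : ℝ) ≠ 0 := by exact_mod_cast (hpos y).ne'
    unfold kp kK kP
    by_cases hy : y ∈ B
    · rw [if_pos hy, mul_div_cancel₀ _ h,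
        ENNReal.ofReal_sum_of_nonneg (fun z _ => kK_nonneg G B x n z),
        tsum_eq_sum (s := (G.neighborFinset y).map Function.Embedding.some)]
      · rw [Finset.sum_map]
        refine Finset.sum_congr rfl fun z hz => ?_
        rw [SimpleGraph.mem_neighborFinset] at hz
        simp only [Function.Embedding.some_apply, ih]
        have hz0 : 0 < (G.degree z : ℝ) := by exact_mod_cast hpos z
        by_cases hzB : z ∈ B
        · simp only [killedStep, Finset.mem_coe, hzB, hy, hz.symm, and_self, if_true]
          rw [← ENNReal.ofReal_natCast, ← ENNReal.ofReal_inv_of_pos hz0,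
            ← ENNReal.ofReal_mul (mul_nonneg hz0.le (kK_nonneg G B x n z))]
          congr 1; field_simp
        · simp [kK_supp G B x hx n z hzB]
      · intro c hc
        rcases c with _ | z
        · simp [killedStep]
        · have : ¬ G.Adj z y := by
            intro hadj; apply hc
            simp only [Finset.mem_map, SimpleGraph.mem_neighborFinset]
            exact ⟨z, hadj.symm, rfl⟩
          simp [killedStep, this]
    · rw [if_neg hy, mul_zero, ENNReal.ofReal_zero]
      refine ENNReal.tsum_eq_zero.2 fun c => ?_
      rcases c with _ | z <;> simp [killedStep, hy]

lemma coord_meas [Countable V] (m : ℕ) (c : Option V × Option V) :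
    MeasurableSet {ω : ℕ → Option V × Option V | ω m = c} :=
  (measurable_pi_apply (X := fun _ : ℕ => Option V × Option V) m) (MeasurableSet.singleton c)

/-- Restriction of a trajectory to its first `n+1` coordinates. -/
def kRes (V : Type*) (n : ℕ) (ω : ℕ → Option V × Option V) : Fin (n + 1) → Option V × Option V :=
  fun i => ω i

lemma kRes_meas [Countable V] (n : ℕ) (A : Set (Fin (n + 1) → Option V × Option V)) :
    MeasurableSet (kRes V n ⁻¹' A) := by
  have : Measurable (kRes V n) := by
    unfold kRes
    exact measurable_pi_lambda _ fun i => measurable_pi_apply _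
  exact this (A.to_countable.measurableSet)

lemma cyl_snoc (G : SimpleGraph V) [G.LocallyFinite] (B : Set V) (o : V) (n : ℕ)
    (w : Fin (n + 1) → Option V) (b : Option V) :
    killedCylProb G B o (Fin.snoc (α := fun _ => Option V) w b : Fin (n + 1 + 1) → Option V) =
      killedCylProb G B o w * killedStep G B (w (Fin.last n)) b := by
  unfold killedCylProb
  rw [Fin.prod_univ_castSucc, mul_assoc]
  have h0 : (Fin.snoc (α := fun _ => Option V) w b : Fin (n + 1 + 1) → Option V) 0 = w 0 :=
    Fin.snoc_castSucc (α := fun _ => Option V) b w 0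
  have hl : ∀ i : Fin n, (Fin.snoc (α := fun _ => Option V) w b : Fin (n + 1 + 1) → Option V)
      (i.castSucc.succ) = w i.succ := fun i => by
    rw [Fin.succ_castSucc]
    exact Fin.snoc_castSucc (α := fun _ => Option V) b w i.succ
  rw [h0]
  simp only [hl, Fin.snoc_castSucc, Fin.succ_last, Fin.snoc_last]

lemma one_step [Countable V] (G : SimpleGraph V) [G.LocallyFinite] (B : Set V) (o o₂ : V)
    (ν : Measure (ℕ → Option V × Option V)) (hν : IsKilledPairLaw G B o o₂ ν) (n : ℕ)
    (A : Set (Fin (n + 1) → Option V × Option V)) (a b : Option V × Option V)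
    (hA : ∀ w ∈ A, w (Fin.last n) = a) :
    ν (kRes V n ⁻¹' A ∩ {ω | ω (n + 1) = b}) =
      ν (kRes V n ⁻¹' A) * (killedStep G B a.1 b.1 * killedStep G B a.2 b.2) := by
  have hm : MeasurableSet {ω : ℕ → Option V × Option V | ω (n + 1) = b} :=
    coord_meas _ _
  rw [← Measure.restrict_apply (kRes_meas n A),
    ← tsum_measure_preimage_singleton A.to_countable (fun w _ => kRes_meas n {w}),
    ← tsum_measure_preimage_singleton A.to_countable (fun w _ => kRes_meas n {w}),
    ← ENNReal.tsum_mul_right]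
  refine tsum_congr fun w => ?_
  rw [Measure.restrict_apply (kRes_meas n _)]
  have e1 : kRes V n ⁻¹' {(w : Fin (n + 1) → Option V × Option V)} =
      {ω | ∀ i : Fin (n + 1), ω i = w.1 i} := by
    ext ω
    simp [kRes, funext_iff]
  have e2 : kRes V n ⁻¹' {(w : Fin (n + 1) → Option V × Option V)} ∩ {ω | ω (n + 1) = b} =
      {ω | ∀ i : Fin (n + 1 + 1), ω i =
        (Fin.snoc (α := fun _ => Option V × Option V) w.1 b : Fin (n + 1 + 1) → _) i} := by
    rw [e1]
    ext ω
    simp only [Set.mem_inter_iff, Set.mem_ofPred_eq, Fin.forall_fin_succ', Fin.snoc_castSucc,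
      Fin.snoc_last, Fin.val_castSucc, Fin.val_last]
  rw [e2, e1, hν.2, hν.2]
  have f1 : (fun i => ((Fin.snoc (α := fun _ => Option V × Option V) w.1 b :
      Fin (n + 1 + 1) → _) i).1) =
      (Fin.snoc (α := fun _ => Option V) (fun i => (w.1 i).1) b.1 : Fin (n + 1 + 1) → _) := by
    ext1 i
    refine Fin.lastCases ?_ (fun i => ?_) i <;> simp
  have f2 : (fun i => ((Fin.snoc (α := fun _ => Option V × Option V) w.1 b :
      Fin (n + 1 + 1) → _) i).2) =
      (Fin.snoc (α := fun _ => Option V) (fun i => (w.1 i).2) b.2 : Fin (n + 1 + 1) → _) := by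
    ext1 i
    refine Fin.lastCases ?_ (fun i => ?_) i <;> simp
  rw [f1, f2, cyl_snoc, cyl_snoc, hA w.1 w.2]
  ring

lemma multi_step [Countable V] (G : SimpleGraph V) [G.LocallyFinite] (B : Set V) (o o₂ : V)
    (ν : Measure (ℕ → Option V × Option V)) (hν : IsKilledPairLaw G B o o₂ ν) (n k : ℕ)
    (a b : Option V × Option V) :
    ν ({ω | ω n = a} ∩ {ω | ω (n + k) = b}) =
      ν {ω | ω n = a} * (kp G B a.1 k b.1 * kp G B a.2 k b.2) := by
  induction k generalizing b with
  | zero =>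
    by_cases h : b = a
    · subst h; simp [kp]
    · have h1 : ({ω | ω n = a} ∩ {ω | ω (n + 0) = b} : Set (ℕ → Option V × Option V)) = ∅ := by
        ext ω
        simp only [Set.mem_inter_iff, Set.mem_ofPred_eq, add_zero, Set.mem_empty_iff_false,
          iff_false, not_and]
        rintro h1 h2; exact h (h2.symm.trans h1)
      rw [h1]
      have h2 : ¬ (b.1 = a.1 ∧ b.2 = a.2) := fun hh => h (Prod.ext hh.1 hh.2)
      by_cases h3 : b.1 = a.1
      · have h4 : b.2 ≠ a.2 := fun h4 => h2 ⟨h3, h4⟩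
        simp [kp, h4]
      · simp [kp, h3]
  | succ k ih =>
    have hm : ∀ (m : ℕ) (c : Option V × Option V),
        MeasurableSet {ω : ℕ → Option V × Option V | ω m = c} := fun m c =>
      coord_meas _ _
    have h1 : ν ({ω | ω n = a} ∩ {ω | ω (n + (k + 1)) = b}) =
        ∑' c : Option V × Option V,
          ν ({ω | ω n = a} ∩ {ω | ω (n + k) = c} ∩ {ω | ω (n + k + 1) = b}) := by
      rw [← measure_iUnion]
      · congr 1
        ext ω
        simp only [Set.mem_inter_iff, Set.mem_ofPred_eq, Set.mem_iUnion]
        constructor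
        · rintro ⟨h1, h2⟩; exact ⟨ω (n + k), ⟨h1, rfl⟩, h2⟩
        · rintro ⟨c, ⟨h1, h2⟩, h3⟩; exact ⟨h1, h3⟩
      · intro c d hcd
        refine Set.disjoint_left.2 ?_
        rintro ω ⟨⟨-, h1⟩, -⟩ ⟨⟨-, h2⟩, -⟩
        exact hcd (h1.symm.trans h2)
      · intro c
        exact ((hm _ _).inter (hm _ _)).inter (hm _ _)
    have h2 : ∀ c : Option V × Option V,
        ν ({ω | ω n = a} ∩ {ω | ω (n + k) = c} ∩ {ω | ω (n + k + 1) = b}) =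
        ν {ω | ω n = a} * ((kp G B a.1 k c.1 * killedStep G B c.1 b.1) *
          (kp G B a.2 k c.2 * killedStep G B c.2 b.2)) := by
      intro c
      have e : ({ω | ω n = a} ∩ {ω | ω (n + k) = c} : Set (ℕ → Option V × Option V)) =
          kRes V (n + k) ⁻¹' {w | w ⟨n, by omega⟩ = a ∧ w (Fin.last _) = c} := by
        ext ω; simp [kRes]
      have := one_step G B o o₂ ν hν (n + k)
        {w | w ⟨n, by omega⟩ = a ∧ w (Fin.last _) = c} c b (fun w hw => hw.2)
      rw [← e, ih c] at this
      rw [this]; ring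
    rw [h1]
    simp only [h2]
    rw [ENNReal.tsum_mul_left]
    congr 1
    rw [ENNReal.tsum_prod (f := fun c d => kp G B a.1 k c * killedStep G B c b.1 *
      (kp G B a.2 k d * killedStep G B d b.2))]
    simp only [ENNReal.tsum_mul_left, ENNReal.tsum_mul_right]
    rfl

lemma zero_law (G : SimpleGraph V) [G.LocallyFinite] (B : Set V) (o o₂ : V)
    (ν : Measure (ℕ → Option V × Option V)) (hν : IsKilledPairLaw G B o o₂ ν) :
    ν {ω | ω 0 = (some o, some o₂)} = 1 := by
  have h := hν.2 0 (fun _ => (some o, some o₂))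
  simpa [killedCylProb] using h

lemma law_n [Countable V] (G : SimpleGraph V) [G.LocallyFinite] (B : Set V) (o o₂ : V)
    (ν : Measure (ℕ → Option V × Option V)) (hν : IsKilledPairLaw G B o o₂ ν) (k : ℕ)
    (b : Option V × Option V) :
    ν {ω | ω k = b} = kp G B (some o) k b.1 * kp G B (some o₂) k b.2 := by
  have h := multi_step G B o o₂ ν hν 0 k (some o, some o₂) b
  have hm : MeasurableSet {ω : ℕ → Option V × Option V | ω 0 = (some o, some o₂)} :=
      coord_meas _ _
  have := hν.1
  rw [zero_law G B o o₂ ν hν, one_mul, zero_add] at h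
  rw [← h]
  rw [Set.inter_comm]
  refine (measure_inter_conull ?_).symm
  exact (prob_compl_eq_zero_iff hm).2 (zero_law G B o o₂ ν hν)

/-- Collision event at time `n`. -/
def kColl (B : Finset V) (n : ℕ) : Set (ℕ → Option V × Option V) :=
  {ω | ∃ x ∈ (B : Set V), (ω n).1 = some x ∧ (ω n).2 = some x}

lemma kColl_eq (B : Finset V) (n : ℕ) : kColl B n = ⋃ x ∈ B, {ω | ω n = (some x, some x)} := by
  ext ω
  simp only [kColl, Prod.ext_iff, Set.mem_iUnion, Set.mem_ofPred_eq, Finset.mem_coe, exists_prop]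

lemma kColl_meas [Countable V] (B : Finset V) (n : ℕ) : MeasurableSet (kColl B n) := by
  rw [kColl_eq]
  exact B.measurableSet_biUnion fun x _ => coord_meas _ _

lemma kColl_inter [Countable V] (ν : Measure (ℕ → Option V × Option V)) (B : Finset V) (n : ℕ)
    (E : Set (ℕ → Option V × Option V)) (hE : MeasurableSet E) :
    ν (E ∩ kColl B n) = ∑ x ∈ B, ν (E ∩ {ω | ω n = (some x, some x)}) := by
  rw [kColl_eq, Set.inter_iUnion₂, measure_biUnion_finset]
  · intro x _ y _ hxy
    refine Set.disjoint_left.2 ?_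
    rintro ω ⟨-, h1⟩ ⟨-, h2⟩
    have := h1.symm.trans h2
    simp at this
    exact hxy this
  · intro x _
    exact hE.inter (coord_meas _ _)

lemma kp_sq (G : SimpleGraph V) [G.LocallyFinite] (hpos : ∀ x, 0 < G.degree x)
    (B : Finset V) (x : V) (hx : x ∈ B) (n : ℕ) :
    ∑ y ∈ B, kp G (B : Set V) (some x) n (some y) * kp G (B : Set V) (some x) n (some y) =
      ENNReal.ofReal (kC G B x n) := by
  unfold kC
  rw [ENNReal.ofReal_sum_of_nonneg fun _ _ => sq_nonneg _]
  refine Finset.sum_congr rfl fun y _ => ?_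
  rw [kp_eq G hpos B x hx, sq, ← ENNReal.ofReal_mul]
  exact mul_nonneg (Nat.cast_nonneg _) (kK_nonneg G B x n y)

lemma kColl_law [Countable V] (G : SimpleGraph V) [G.LocallyFinite] (hpos : ∀ x, 0 < G.degree x)
    (B : Finset V) (o : V) (ho : o ∈ B)
    (ν : Measure (ℕ → Option V × Option V)) (hν : IsKilledPairLaw G (B : Set V) o o ν) (n : ℕ) :
    ν (kColl B n) = ENNReal.ofReal (kC G B o n) := by
  have := kColl_inter ν B n Set.univ MeasurableSet.univ
  simp only [Set.univ_inter] at this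
  rw [this, ← kp_sq G hpos B o ho]
  refine Finset.sum_congr rfl fun y _ => ?_
  rw [law_n G _ o o ν hν]

lemma kColl_law2 [Countable V] (G : SimpleGraph V) [G.LocallyFinite] (hpos : ∀ x, 0 < G.degree x)
    (B : Finset V) (o : V)
    (ν : Measure (ℕ → Option V × Option V)) (hν : IsKilledPairLaw G (B : Set V) o o ν) (n k : ℕ) :
    ν (kColl B n ∩ kColl B (n + k)) =
      ∑ y ∈ B, ν {ω | ω n = (some y, some y)} * ENNReal.ofReal (kC G B y k) := by
  rw [Set.inter_comm, kColl_inter ν B n _ (kColl_meas B _)]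
  refine Finset.sum_congr rfl fun y hy => ?_
  rw [Set.inter_comm, kColl_inter ν B (n + k) _
    (coord_meas _ _), ← kp_sq G hpos B y hy, Finset.mul_sum]
  refine Finset.sum_congr rfl fun z _ => ?_
  exact multi_step G _ o o ν hν n k _ _

lemma collisions_eq (B : Finset V) (ω : ℕ → Option V × Option V) :
    collisions (B : Set V) ω = ∑' n, (kColl B n).indicator 1 ω := by
  unfold collisions
  refine tsum_congr fun n => ?_
  simp [Set.indicator_apply, kColl]

lemma sq_tsum_le (f : ℕ → ℝ≥0∞) :
    (∑' n, f n) ^ 2 ≤ 2 * ∑' n, ∑' k, f n * f (n + k) := by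
  have h1 : ∑' n, ∑' m, (if n ≤ m then f n * f m else 0) = ∑' n, ∑' k, f n * f (n + k) := by
    refine tsum_congr fun n => ?_
    have hinj : Function.Injective (fun k : ℕ => n + k) := fun a b h => by simpa using h
    rw [← hinj.tsum_eq (f := fun m => if n ≤ m then f n * f m else 0)]
    · simp
    · intro m hm
      simp only [Function.mem_support, ne_eq, ite_eq_right_iff, Classical.not_imp] at hm
      exact ⟨m - n, by simp; omega⟩
  have h2 : ∑' n, ∑' m, (if m ≤ n then f n * f m else 0) =
      ∑' n, ∑' m, (if n ≤ m then f n * f m else 0) := by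
    rw [ENNReal.tsum_comm]
    simp only [mul_comm]
  calc (∑' n, f n) ^ 2 = ∑' n, ∑' m, f n * f m := by
        simp only [ENNReal.tsum_mul_left, ENNReal.tsum_mul_right, sq]
    _ ≤ ∑' n, ∑' m, ((if n ≤ m then f n * f m else 0) + (if m ≤ n then f n * f m else 0)) := by
        refine ENNReal.tsum_le_tsum fun n => ENNReal.tsum_le_tsum fun m => ?_
        rcases le_total n m with h | h
        · rw [if_pos h]; exact le_self_add
        · rw [if_pos h]; exact le_add_self
    _ = _ := by
        simp only [ENNReal.tsum_add]
        rw [h2, h1, two_mul]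

lemma collisions_meas [Countable V] (B : Finset V) :
    Measurable (collisions (B : Set V)) := by
  rw [funext (collisions_eq B)]
  exact Measurable.tsum fun n => measurable_one.indicator (kColl_meas B n)

lemma first_moment [Countable V] (G : SimpleGraph V) [G.LocallyFinite]
    (hpos : ∀ x, 0 < G.degree x) (B : Finset V) (o : V) (ho : o ∈ B)
    (ν : Measure (ℕ → Option V × Option V)) (hν : IsKilledPairLaw G (B : Set V) o o ν) :
    ∫⁻ ω, collisions (B : Set V) ω ∂ν = ∑' n, ENNReal.ofReal (kC G B o n) := by
  simp only [collisions_eq]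
  rw [lintegral_tsum fun n => (measurable_one.indicator (kColl_meas B n)).aemeasurable]
  refine tsum_congr fun n => ?_
  rw [lintegral_indicator_one (kColl_meas B n), kColl_law G hpos B o ho ν hν]

lemma second_moment [Countable V] (G : SimpleGraph V) [G.LocallyFinite]
    (hpos : ∀ x, 0 < G.degree x) (B : Finset V) (o : V) (ho : o ∈ B)
    (ν : Measure (ℕ → Option V × Option V)) (hν : IsKilledPairLaw G (B : Set V) o o ν)
    (M : ℝ≥0∞) (hM : ∀ y ∈ B, ∑' n, ENNReal.ofReal (kC G B y n) ≤ M) :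
    ∫⁻ ω, collisions (B : Set V) ω ^ 2 ∂ν ≤ 2 * M * ∫⁻ ω, collisions (B : Set V) ω ∂ν := by
  have hme : ∀ n, Measurable ((kColl B n).indicator (1 : (ℕ → Option V × Option V) → ℝ≥0∞)) :=
    fun n => measurable_one.indicator (kColl_meas B n)
  calc ∫⁻ ω, collisions (B : Set V) ω ^ 2 ∂ν
      ≤ ∫⁻ ω, 2 * ∑' n, ∑' k, (kColl B n).indicator 1 ω * (kColl B (n + k)).indicator 1 ω ∂ν := by
        refine lintegral_mono fun ω => ?_
        rw [collisions_eq]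
        exact sq_tsum_le _
    _ = 2 * ∑' n, ∑' k, ν (kColl B n ∩ kColl B (n + k)) := by
        rw [lintegral_const_mul, lintegral_tsum]
        · congr 1
          refine tsum_congr fun n => ?_
          rw [lintegral_tsum]
          · refine tsum_congr fun k => ?_
            rw [← lintegral_indicator_one ((kColl_meas B n).inter (kColl_meas B (n + k)))]
            refine lintegral_congr fun ω => ?_
            rw [Set.inter_indicator_one]; rfl
          · exact fun k => ((hme n).mul (hme (n + k))).aemeasurable
        · exact fun n => (Measurable.tsum fun k => (hme n).mul (hme (n + k))).aemeasurable
        · exact Measurable.tsum fun n =>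
            Measurable.tsum fun k => (hme n).mul (hme (n + k))
    _ ≤ 2 * ∑' n, M * ν (kColl B n) := by
        gcongr with n
        simp only [kColl_law2 G hpos B o ν hν]
        rw [Summable.tsum_finsetSum fun _ _ => ENNReal.summable]
        have := kColl_inter ν B n Set.univ MeasurableSet.univ
        simp only [Set.univ_inter] at this
        rw [this, Finset.mul_sum]
        refine Finset.sum_le_sum fun y hy => ?_
        rw [ENNReal.tsum_mul_left, mul_comm]
        gcongr
        exact hM y hy
    _ = _ := by
        rw [ENNReal.tsum_mul_left, first_moment G hpos B o ho ν hν, mul_assoc]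
        simp only [kColl_law G hpos B o ho ν hν]

lemma ball_finite (G : SimpleGraph V) [G.LocallyFinite] (hconn : G.Connected) (o : V) (r : ℕ) :
    {x : V | G.dist o x ≤ r}.Finite := by
  induction r with
  | zero =>
    refine (Set.finite_singleton o).subset fun x hx => ?_
    simp only [Set.mem_ofPred_eq, Nat.le_zero] at hx
    exact ((hconn.dist_eq_zero_iff).1 hx).symm
  | succ r ih =>
    refine (ih.union (ih.biUnion fun x _ => (G.neighborFinset x).finite_toSet)).subset ?_
    intro x hx
    obtain ⟨p, hp⟩ := hconn.exists_walk_length_eq_dist o x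
    by_cases h : G.dist o x ≤ r
    · exact Or.inl h
    · refine Or.inr ?_
      simp only [Set.mem_ofPred_eq] at hx
      have hl : p.length = r + 1 := by omega
      simp only [Set.mem_iUnion]
      refine ⟨p.getVert r, ?_, ?_⟩
      · have := SimpleGraph.dist_le (p.take r)
        rw [SimpleGraph.Walk.take_length] at this
        exact this.trans (min_le_left _ _)
      · have := p.adj_getVert_succ (i := r) (by omega)
        rw [← hl, p.getVert_length] at this
        simpa using this

lemma exists_sphere (G : SimpleGraph V) [G.LocallyFinite] (hconn : G.Connected)
    (hinf : Infinite V) (o : V) (r : ℕ) : ∃ u, G.dist o u = r + 1 := by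
  obtain ⟨v, hv⟩ := (ball_finite G hconn o r).infinite_compl.nonempty
  simp only [Set.mem_compl_iff, Set.mem_ofPred_eq, not_le] at hv
  obtain ⟨p, hp⟩ := hconn.exists_walk_length_eq_dist o v
  refine ⟨p.getVert (r + 1), ?_⟩
  have h1 := SimpleGraph.dist_le (p.take (r + 1))
  have h2 := SimpleGraph.dist_le (p.drop (r + 1))
  rw [SimpleGraph.Walk.take_length] at h1
  rw [SimpleGraph.Walk.drop_length] at h2
  have h3 := hconn.dist_triangle (u := o) (v := p.getVert (r + 1)) (w := v)
  omega

lemma countable_of_conn (G : SimpleGraph V) [G.LocallyFinite] (hconn : G.Connected) (o : V) :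
    Countable V := by
  have : (Set.univ : Set V) = ⋃ r : ℕ, {x : V | G.dist o x ≤ r} := by
    ext x; simp only [Set.mem_univ, Set.mem_iUnion, Set.mem_ofPred_eq, true_iff]
    exact ⟨_, le_rfl⟩
  rw [← Set.countable_univ_iff, this]
  exact Set.countable_iUnion fun r => (ball_finite G hconn o r).countable

lemma pointwise (a t L : ℝ) (ha : 0 ≤ a) (ht : 0 < t) (hL : 0 < L) (z p : ℝ) (hz : 0 ≤ z)
    (hp : 0 ≤ p) (h1 : a ≤ z → z ≤ L → p = 1) :
    z ≤ a + z ^ 2 * (4 * t)⁻¹ + t * p + t * L⁻¹ * z := by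
  have hq : 0 ≤ z ^ 2 * (4 * t)⁻¹ := by positivity
  have hl : 0 ≤ t * L⁻¹ * z := by positivity
  have hp1 : 0 ≤ t * p := by positivity
  by_cases hza : z < a
  · linarith
  · have key : z ≤ z ^ 2 * (4 * t)⁻¹ + t := by
      have : z ^ 2 * (4 * t)⁻¹ + t - z = (z - 2 * t) ^ 2 * (4 * t)⁻¹ := by
        field_simp; ring
      have h2 : 0 ≤ (z - 2 * t) ^ 2 * (4 * t)⁻¹ := by positivity
      linarith
    by_cases hzL : z ≤ L
    · rw [h1 (not_lt.1 hza) hzL] at *; linarith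
    · have : 1 ≤ L⁻¹ * z := by
        rw [inv_mul_eq_div, le_div_iff₀ hL]; linarith
      have : t ≤ t * L⁻¹ * z := by rw [mul_assoc]; nlinarith
      linarith

end helpers

/-- If every vertex of `G` has degree at most `6` and
`12εr ≤ R_eff(0, V∖B_r) ≤ r`, then the number of collisions of two independent
simple random walks on `G` killed upon exiting the graph-metric ball `B_r`,
both started at `0`, satisfies `P₀₀(εr ≤ Z_{B_r} ≤ 72ε⁻²r) ≥ ε²/12`. -/
theorem collision_second_moment_method
    (G : SimpleGraph V) [G.LocallyFinite] (hconn : G.Connected) (hinf : Infinite V)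
    (o : V) (hdeg : ∀ x : V, G.degree x ≤ 6)
    (r : ℕ) (hr : 1 ≤ r) (ε : ℝ) (hε : 0 < ε)
    (Br : Set V) (hBr : Br = {x : V | G.dist o x ≤ r})
    (hlow : ENNReal.ofReal (12 * ε * r) ≤ effRes G {o} Brᶜ)
    (hup : effRes G {o} Brᶜ ≤ (r : ℝ≥0∞))
    (ν : Measure (ℕ → Option V × Option V)) (hν : IsKilledPairLaw G Br o o ν) :
    ENNReal.ofReal (ε ^ 2 / 12) ≤
      ν {ω | ENNReal.ofReal (ε * r) ≤ collisions Br ω ∧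
             collisions Br ω ≤ ENNReal.ofReal (72 * ε⁻¹ ^ 2 * r)} := by
  have hcount := countable_of_conn G hconn o
  have hpos : ∀ x, 0 < G.degree x := by
    intro x
    have : Nontrivial V := inferInstance
    exact hconn.preconnected.degree_pos_of_nontrivial x
  obtain ⟨B, hB⟩ : ∃ B : Finset V, (B : Set V) = Br := by
    rw [hBr]
    exact ⟨(ball_finite G hconn o r).toFinset, by simp⟩
  have hmem : ∀ x, x ∈ B ↔ G.dist o x ≤ r := by
    intro x
    rw [← Finset.mem_coe, hB, hBr, Set.mem_ofPred_eq]
  clear hBr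
  subst hB
  have ho : o ∈ B := by rw [hmem]; simp
  have hr1 : (1 : ℝ) ≤ r := by exact_mod_cast hr
  have hr0 : (0 : ℝ) < r := by linarith
  have hε1 : 12 * ε ≤ 1 := by
    have h := hlow.trans hup
    rw [← ENNReal.ofReal_natCast, ENNReal.ofReal_le_ofReal_iff hr0.le] at h
    by_contra hc
    nlinarith
  -- uniform bound on the expected number of collisions
  obtain ⟨u, hu⟩ := exists_sphere G hconn hinf o r
  have huB : u ∉ B := by rw [hmem]; omega
  have hsum : ∀ y ∈ B, ∀ N, ∑ n ∈ Finset.range N, kC G B y n ≤ 36 * r := by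
    intro y hy N
    have hd : G.dist y u ≤ 3 * r := by
      have h1 := hconn.dist_triangle (u := y) (v := o) (w := u)
      rw [G.dist_comm (u := y) (v := o)] at h1
      have h2 := (hmem y).1 hy
      omega
    have h1 := kC_sum_le G hpos hdeg B y hy N
    have h2 := kT_le G hpos B hconn y u hy huB (3 * r) hd (N + N)
    push_cast at h2
    linarith
  have hM : ∀ y ∈ B, ∑' n, ENNReal.ofReal (kC G B y n) ≤ ENNReal.ofReal (36 * r) := by
    intro y hy
    rw [ENNReal.tsum_eq_iSup_nat]
    refine iSup_le fun N => ?_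
    rw [← ENNReal.ofReal_sum_of_nonneg fun n _ => kC_nonneg G B y n]
    exact ENNReal.ofReal_le_ofReal (hsum y hy N)
  have hm1 := first_moment G hpos B o ho ν hν
  have hm2 := second_moment G hpos B o ho ν hν _ hM
  have hZm := collisions_meas B
  set EZ := ∫⁻ ω, collisions (B : Set V) ω ∂ν with hEZ
  have hfin : EZ ≠ ⊤ := by
    rw [hm1]
    exact ((hM o ho).trans_lt ENNReal.ofReal_lt_top).ne
  obtain ⟨e, he0, hee⟩ : ∃ e : ℝ, 0 ≤ e ∧ EZ = ENNReal.ofReal e :=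
    ⟨EZ.toReal, ENNReal.toReal_nonneg, (ENNReal.ofReal_toReal hfin).symm⟩
  have hlowe : 6 * ε * r ≤ e := by
    have h := effRes_le G hpos B o ho e (fun N => by
      rw [← ENNReal.ofReal_le_ofReal_iff he0, ← hee, hm1,
        ENNReal.ofReal_sum_of_nonneg fun n _ => kC_nonneg G B o n]
      exact ENNReal.sum_le_tsum _)
    have h2 := hlow.trans h
    rw [ENNReal.ofReal_le_ofReal_iff (by positivity)] at h2
    linarith
  have hprob := hν.1
  set A : Set (ℕ → Option V × Option V) := {ω | ENNReal.ofReal (ε * r) ≤ collisions (B : Set V) ω ∧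
             collisions (B : Set V) ω ≤ ENNReal.ofReal (72 * ε⁻¹ ^ 2 * r)} with hA
  have hAm : MeasurableSet A :=
    (measurableSet_le measurable_const hZm).inter (measurableSet_le hZm measurable_const)
  obtain ⟨q, hq0, hqq⟩ : ∃ q : ℝ, 0 ≤ q ∧ ν A = ENNReal.ofReal q :=
    ⟨(ν A).toReal, ENNReal.toReal_nonneg, (ENNReal.ofReal_toReal (measure_ne_top ν A)).symm⟩
  have ht : (0 : ℝ) < 36 * r := by positivity
  have hL : (0 : ℝ) < 72 * ε⁻¹ ^ 2 * r := by positivity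
  have hpt : ∀ ω, collisions (B : Set V) ω ≤
      ENNReal.ofReal (ε * r) + ENNReal.ofReal ((4 * (36 * r))⁻¹) * collisions (B : Set V) ω ^ 2
      + ENNReal.ofReal (36 * r) * A.indicator 1 ω
      + ENNReal.ofReal (36 * r * (72 * ε⁻¹ ^ 2 * r)⁻¹) * collisions (B : Set V) ω := by
    intro ω
    by_cases hz : collisions (B : Set V) ω = ⊤
    · have hc : (0 : ℝ) < 36 * r * (72 * ε⁻¹ ^ 2 * r)⁻¹ := by positivity
      rw [hz, ENNReal.mul_top (ENNReal.ofReal_pos.2 hc).ne', add_top]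
    · obtain ⟨z, hz0, hzz⟩ : ∃ z : ℝ, 0 ≤ z ∧ collisions (B : Set V) ω = ENNReal.ofReal z :=
        ⟨_, ENNReal.toReal_nonneg, (ENNReal.ofReal_toReal hz).symm⟩
      have hind : (A.indicator 1 ω : ℝ≥0∞) = ENNReal.ofReal (A.indicator 1 ω) := by
        by_cases h : ω ∈ A <;> simp [h]
      have hi0 : (0 : ℝ) ≤ A.indicator 1 ω := Set.indicator_nonneg (fun _ _ => zero_le_one) _
      have hp := pointwise (ε * r) (36 * r) (72 * ε⁻¹ ^ 2 * r) (by positivity) ht hL z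
        (A.indicator 1 ω) hz0 hi0 (fun h1 h2 => by
          have : ω ∈ A := by
            rw [hA, Set.mem_ofPred_eq, hzz]
            exact ⟨ENNReal.ofReal_le_ofReal h1, ENNReal.ofReal_le_ofReal h2⟩
          simp [this])
      rw [hind, hzz, ← ENNReal.ofReal_pow hz0, ← ENNReal.ofReal_mul (by positivity),
        ← ENNReal.ofReal_mul (by positivity), ← ENNReal.ofReal_mul (by positivity),
        ← ENNReal.ofReal_add (by positivity) (by positivity),
        ← ENNReal.ofReal_add (by positivity) (by positivity),
        ← ENNReal.ofReal_add (by positivity) (by positivity)]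
      refine ENNReal.ofReal_le_ofReal (hp.trans (le_of_eq ?_))
      ring
  have hint := lintegral_mono (μ := ν) hpt
  have hindm : Measurable (A.indicator (1 : (ℕ → Option V × Option V) → ℝ≥0∞)) :=
    measurable_one.indicator hAm
  rw [lintegral_add_right _ (hZm.const_mul _), lintegral_add_right _ (hindm.const_mul _),
    lintegral_add_right _ ((hZm.pow_const 2).const_mul _), lintegral_const, measure_univ, mul_one,
    lintegral_const_mul _ (hZm.pow_const 2), lintegral_const_mul _ hindm,
    lintegral_const_mul _ hZm, lintegral_indicator_one hAm, ← hEZ] at hint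
  have hint2 : EZ ≤ ENNReal.ofReal (ε * r)
      + ENNReal.ofReal ((4 * (36 * r))⁻¹) * (2 * ENNReal.ofReal (36 * r) * EZ)
      + ENNReal.ofReal (36 * r) * ν A
      + ENNReal.ofReal (36 * r * (72 * ε⁻¹ ^ 2 * r)⁻¹) * EZ := by
    refine hint.trans ?_
    gcongr
  rw [hqq]
  rw [hqq, hee, show (2 : ℝ≥0∞) = ENNReal.ofReal 2 by simp,
    ← ENNReal.ofReal_mul (by positivity), ← ENNReal.ofReal_mul (by positivity),
    ← ENNReal.ofReal_mul (by positivity), ← ENNReal.ofReal_mul (by positivity),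
    ← ENNReal.ofReal_mul (by positivity),
    ← ENNReal.ofReal_add (by positivity) (by positivity),
    ← ENNReal.ofReal_add (by positivity) (by positivity),
    ← ENNReal.ofReal_add (by positivity) (by positivity),
    ENNReal.ofReal_le_ofReal_iff (by positivity)] at hint2
  refine ENNReal.ofReal_le_ofReal ?_
  have e1 : (4 * (36 * (r : ℝ)))⁻¹ * (2 * (36 * r) * e) = e / 2 := by field_simp; norm_num
  have e2 : 36 * (r : ℝ) * (72 * ε⁻¹ ^ 2 * r)⁻¹ * e = ε ^ 2 / 2 * e := by field_simp; ring
  rw [e1, e2] at hint2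
  have h3 : ε ^ 2 ≤ 1 / 12 := by nlinarith
  have h4 : 6 * ε * r * (1 / 2 - ε ^ 2 / 2) ≤ e * (1 / 2 - ε ^ 2 / 2) :=
    mul_le_mul_of_nonneg_right hlowe (by linarith)
  have h5 : 6 * ε * r * (1 / 2 - 1 / 24) ≤ 6 * ε * r * (1 / 2 - ε ^ 2 / 2) :=
    mul_le_mul_of_nonneg_left (by linarith) (by positivity)
  have h6 : r * (7 / 4 * ε) ≤ r * (36 * q) := by nlinarith
  have h7 := le_of_mul_le_mul_left h6 hr0
  nlinarith

end
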